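/- arXiv:2105.07247 — 2 statements merged into one kernel-verified Lean document; each statement's English description precedes it below -/
import Mathlib

section
/- Let G be a finite group, N a normal subgroup with Q = G/N abelian, q ∈ G, and ρ an irreducible complex character of G. Then ρ is not identically zero on the coset qN if and only if qN lies in the kernel of every character χ ∈ Q̂ that stabilizes ρ (i.e. every χ with χ̃ ⊗ ρ = ρ satisfies χ(qN) = 1). -/
open scoped BigOperators

/-- `ρ : G → ℂ` is the character of an irreducible (simple) finite-dimensional
complex representation of `G`. -/
def IsIrrChar (G : Type) [Group G] (ρ : G → ℂ) : Prop :=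
  ∃ V : FDRep ℂ G, CategoryTheory.Simple V ∧ ρ = V.character

/-- `Θ : G → ℂ` is the character of some finite-dimensional complex representation of `G`. -/
def IsChar (G : Type) [Group G] (Θ : G → ℂ) : Prop :=
  ∃ V : FDRep ℂ G, Θ = V.character

variable {G : Type} [Group G]

/-- The action of a character `χ ∈ Q̂` (where `Q = G ⧸ N`) on a function `ρ : G → ℂ`:
`(χ · ρ)(g) = χ(gN) · ρ(g)`. -/
def charMul (N : Subgroup G) [N.Normal] (χ : (G ⧸ N) →* ℂˣ) (ρ : G → ℂ) : G → ℂ :=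
  fun g => (χ (g : G ⧸ N) : ℂ) * ρ g

/-- The orbit of `ρ` under the tensoring action of `Q̂ = Hom(G ⧸ N, ℂˣ)`. -/
def qhatOrbit (N : Subgroup G) [N.Normal] (ρ : G → ℂ) : Set (G → ℂ) :=
  {ρ' | ∃ χ : (G ⧸ N) →* ℂˣ, ρ' = charMul N χ ρ}

/-- The coset `qN`, as a subset of `G`. -/
def coset (N : Subgroup G) [N.Normal] (q : G) : Set G :=
  {g | (g : G ⧸ N) = (q : G ⧸ N)}

/-- `C_q`: the set of conjugacy classes of `G` contained in the coset `qN`. -/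
def Cset (N : Subgroup G) [N.Normal] (q : G) : Set (ConjClasses G) :=
  {c | c.carrier ⊆ coset N q}

/-- `R_q`: the set of `Q̂`-orbits on the irreducible characters of `G`
containing a character not identically zero on `qN`. -/
def Rset (N : Subgroup G) [N.Normal] (q : G) : Set (Set (G → ℂ)) :=
  {S | (∃ ρ, IsIrrChar G ρ ∧ S = qhatOrbit N ρ) ∧ ∃ ρ' ∈ S, ∃ g ∈ coset N q, ρ' g ≠ 0}

/-- The class function `π_x` for `x ∈ Q = G ⧸ N`:
`π_x(g) = (1/#Q̂) ∑_{χ ∈ Q̂} conj(χ(x)) χ(gN)`. -/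
noncomputable def piQ (N : Subgroup G) [N.Normal] (x : G ⧸ N) : G → ℂ :=
  fun g => (Nat.card ((G ⧸ N) →* ℂˣ) : ℂ)⁻¹ *
    ∑ᶠ χ : (G ⧸ N) →* ℂˣ, (starRingEnd ℂ) (χ x : ℂ) * (χ (g : G ⧸ N) : ℂ)

/-- The space of class functions on `G`, as a submodule of `G → ℂ`. -/
noncomputable def classFunSubmodule (G : Type) [Group G] : Submodule ℂ (G → ℂ) where
  carrier := {f | ∀ g h : G, f (h * g * h⁻¹) = f g}
  add_mem' := by intro a b ha hb g h; simp only [Pi.add_apply, ha g h, hb g h]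
  zero_mem' := by intro g h; rfl
  smul_mem' := by intro c f hf g h; simp only [Pi.smul_apply, hf g h]

/-- The space of class functions on `G` vanishing outside the coset `qN`. -/
noncomputable def cosetClassFun (N : Subgroup G) [N.Normal] (q : G) : Submodule ℂ (G → ℂ) where
  carrier := {f | (∀ g h : G, f (h * g * h⁻¹) = f g) ∧ ∀ g, g ∉ coset N q → f g = 0}
  add_mem' := by
    intro a b ha hb
    exact ⟨fun g h => by simp only [Pi.add_apply, ha.1 g h, hb.1 g h],
      fun g hg => by simp only [Pi.add_apply, ha.2 g hg, hb.2 g hg, add_zero]⟩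
  zero_mem' := ⟨fun g h => rfl, fun g hg => rfl⟩
  smul_mem' := by
    intro c f hf
    exact ⟨fun g h => by simp only [Pi.smul_apply, hf.1 g h],
      fun g hg => by simp only [Pi.smul_apply, hf.2 g hg, smul_zero]⟩

section Aux

theorem aux_sum_dual {A : Type} [CommGroup A] [Finite A] [Fintype (A →* ℂˣ)] {a : A}
    (ha : a ≠ 1) : ∑ χ : A →* ℂˣ, ((χ a : ℂˣ) : ℂ) = 0 := by
  have : NeZero (Monoid.exponent A) := ⟨Monoid.exponent_ne_zero_of_finite⟩
  obtain ⟨φ, hφ⟩ := CommGroup.exists_apply_ne_one_of_hasEnoughRootsOfUnity A ℂ ha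
  have h : ((φ a : ℂˣ) : ℂ) * ∑ χ : A →* ℂˣ, ((χ a : ℂˣ) : ℂ)
      = ∑ χ : A →* ℂˣ, ((χ a : ℂˣ) : ℂ) := by
    rw [Finset.mul_sum]
    exact Fintype.sum_equiv (Equiv.mulLeft φ) _ _ (fun χ => by simp)
  have h2 : (((φ a : ℂˣ) : ℂ) - 1) * ∑ χ : A →* ℂˣ, ((χ a : ℂˣ) : ℂ) = 0 := by
    rw [sub_mul, h, one_mul, sub_self]
  rcases mul_eq_zero.1 h2 with h3 | h3
  · exact absurd (Units.ext (by simpa using sub_eq_zero.1 h3)) hφ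
  · exact h3

/-- Twist of a representation by a linear character. -/
noncomputable def auxTwist {H : Type} [Group H] (V : FDRep ℂ H) (θ : H →* ℂˣ) : FDRep ℂ H :=
  FDRep.of (V := V)
    ({ toFun := fun g => ((θ g : ℂˣ) : ℂ) • V.ρ g
       map_one' := by simp
       map_mul' := fun g h => by
        ext v
        simp [mul_smul]
        exact smul_comm _ _ _ } : Representation ℂ H V)

theorem auxTwist_char {H : Type} [Group H] (V : FDRep ℂ H) (θ : H →* ℂˣ) (g : H) :
    (auxTwist V θ).character g = ((θ g : ℂˣ) : ℂ) * V.character g := by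
  have : (auxTwist V θ).character g = LinearMap.trace ℂ V (((θ g : ℂˣ) : ℂ) • V.ρ g) := rfl
  rw [this, map_smul, smul_eq_mul]
  rfl

theorem aux_main {H A : Type} [Group H] [Fintype H] [CommGroup A] [Finite A] (f : H →* A) (q : H)
    (V : FDRep ℂ H) (hV : CategoryTheory.Simple V)
    (h0 : ∀ g, f g = f q → V.character g = 0)
    (hst : ∀ χ : A →* ℂˣ, (∀ g, ((χ (f g) : ℂˣ) : ℂ) * V.character g = V.character g) →
      χ (f q) = 1) : False := by
  classical
  have : NeZero (Monoid.exponent A) := ⟨Monoid.exponent_ne_zero_of_finite⟩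
  have : Finite (A →* ℂˣ) := by
    obtain ⟨e⟩ := CommGroup.monoidHom_mulEquiv_of_hasEnoughRootsOfUnity A ℂ
    exact Finite.of_equiv _ e.symm.toEquiv
  have := Fintype.ofFinite (A →* ℂˣ)
  have hn : (Nat.card H : ℂ) ≠ 0 := by simp
  have := invertibleOfNonzero hn
  have hsimp : ∀ χ : A →* ℂˣ, CategoryTheory.Simple (auxTwist V (χ.comp f)) := by
    intro χ
    rw [FDRep.simple_iff_char_is_norm_one] at hV ⊢
    rw [← hV]
    refine Finset.sum_congr rfl fun g _ => ?_
    rw [auxTwist_char, auxTwist_char]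
    have : (((χ.comp f) g : ℂˣ) : ℂ) * (((χ.comp f) g⁻¹ : ℂˣ) : ℂ) = 1 := by
      rw [← Units.val_mul, ← map_mul]; simp
    linear_combination (V.character g * V.character g⁻¹) * this
  let c : (A →* ℂˣ) → ℂ := fun χ =>
    ∑ g : H, ((χ (f g) : ℂˣ) : ℂ) * (V.character g * V.character g⁻¹)
  have hc : ∀ χ, c χ = 0 ∨ (c χ = Nat.card H ∧ χ (f q) = 1) := by
    intro χ
    have := hsimp χ
    have h := FDRep.char_orthonormal (auxTwist V (χ.comp f)) V
    have hcc : ∑ g : H, (auxTwist V (χ.comp f)).character g * V.character g⁻¹ = c χ :=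
      Finset.sum_congr rfl fun g _ => by rw [auxTwist_char, mul_assoc]; rfl
    rw [hcc] at h
    split_ifs at h with hi
    · right
      refine ⟨?_, hst χ fun g => ?_⟩
      · field_simp at h
        simpa using h
      · have hg := congrFun (FDRep.char_iso hi.some) g
        rw [auxTwist_char] at hg
        exact hg
    · left
      simpa [hn] using h
  have hc1 : c 1 = Nat.card H := by
    rw [FDRep.simple_iff_char_is_norm_one] at hV
    rw [← hV]
    simp [c]
  have hzero : ∑ χ : A →* ℂˣ, (((χ (f q))⁻¹ : ℂˣ) : ℂ) * c χ = 0 := by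
    simp only [c, Finset.mul_sum]
    rw [Finset.sum_comm]
    refine Finset.sum_eq_zero fun g _ => ?_
    by_cases hg : f g = f q
    · simp [h0 g hg]
    · have hne : (f q)⁻¹ * f g ≠ 1 := fun h => hg (inv_mul_eq_one.1 h).symm
      have := aux_sum_dual hne
      calc _ = (∑ χ : A →* ℂˣ, ((χ ((f q)⁻¹ * f g) : ℂˣ) : ℂ)) *
            (V.character g * V.character g⁻¹) := by
            rw [Finset.sum_mul]
            exact Finset.sum_congr rfl fun χ _ => by
              rw [map_mul, map_inv, Units.val_mul, mul_assoc]
        _ = 0 := by rw [this, zero_mul]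
  have hre := congrArg Complex.re hzero
  rw [Complex.re_sum] at hre
  have hnn : ∀ χ ∈ (Finset.univ : Finset (A →* ℂˣ)),
      0 ≤ ((((χ (f q))⁻¹ : ℂˣ) : ℂ) * c χ).re := by
    intro χ _
    rcases hc χ with h | ⟨h, h'⟩
    · simp [h]
    · simp [h, h']
  have := (Finset.sum_eq_zero_iff_of_nonneg hnn).1 hre 1 (Finset.mem_univ _)
  rw [hc1] at this
  simp at this

end Aux

/-- `ρ` is not identically zero on `qN` iff `qN` lies in the kernel of
every `χ ∈ Q̂` stabilizing `ρ`. -/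
theorem not_zero_on_coset_iff_mem_kernels
    (G : Type) [Group G] [Fintype G] (N : Subgroup G) [N.Normal]
    (hQ : ∀ a b : G ⧸ N, a * b = b * a) (q : G)
    (ρ : G → ℂ) (hρ : IsIrrChar G ρ) :
    (∃ g ∈ coset N q, ρ g ≠ 0) ↔
      (∀ χ : (G ⧸ N) →* ℂˣ, charMul N χ ρ = ρ → χ (q : G ⧸ N) = 1) := by
  obtain ⟨V, hV, rfl⟩ := hρ
  constructor
  · rintro ⟨g, hg, hne⟩ χ hχ
    have h := congrFun hχ g
    have hg' : (g : G ⧸ N) = (q : G ⧸ N) := hg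
    simp only [charMul, hg'] at h
    exact Units.ext (by simpa using mul_right_cancel₀ hne (h.trans (one_mul _).symm))
  · intro hst
    by_contra hcon
    push Not at hcon
    letI : CommGroup (G ⧸ N) := { (inferInstance : Group (G ⧸ N)) with mul_comm := hQ }
    exact aux_main (QuotientGroup.mk' N) q V hV (fun g hg => hcon g hg)
      (fun χ hχ => hst χ (funext hχ))
end

section
/- Let G be a finite group and N a normal subgroup with Q = G/N abelian. Choose a set U of representatives for the Q̂-orbits on Irr G. Then the collection of class functions √(#[ρ]) · (π_q ⊗ ρ), indexed by ρ ∈ U and cosets qN ∈ Q lying in the intersection of the kernels of all χ ∈ Stab(ρ), is an orthonormal basis of the complex vector space of class functions on G (with inner product ⟨f₁,f₂⟩ = (1/#G) Σ_{g∈G} f₁(g) conj(f₂(g))). -/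
open scoped BigOperators

variable {G : Type} [Group G]

open scoped MonoidAlgebra in
theorem aux_isIrrChar_of {G : Type} [Group G] [Fintype G] {V : Type} [AddCommGroup V] [Module ℂ V]
    [FiniteDimensional ℂ V] (ρ : Representation ℂ G V) [ρ.IsIrreducible] :
    IsIrrChar G ρ.character := by
  have : Invertible (Nat.card G : ℂ) := invertibleOfNonzero (by simp)
  refine ⟨FDRep.of ρ, ?_, rfl⟩
  rw [FDRep.simple_iff_char_is_norm_one]
  have h := Representation.char_orthonormal ρ ρ
  rw [if_pos ⟨Representation.Equiv.refl ρ⟩] at h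
  have h0 : (Nat.card G : ℂ) ≠ 0 := by simp
  change ∑ g : G, ρ.character g * ρ.character g⁻¹ = _
  field_simp at h
  simpa using h

theorem aux_scalar_zero {G : Type} [Group G] [Fintype G] {V : Type} [AddCommGroup V] [Module ℂ V]
    [FiniteDimensional ℂ V] (ρ : Representation ℂ G V) [ρ.IsIrreducible] (c : G → ℂ)
    (hc : ∀ g h : G, c (h * g * h⁻¹) = c g) (h : ∑ g, c g * ρ.character g = 0) :
    ∑ g, c g • ρ g = 0 := by
  let T : Representation.IntertwiningMap ρ ρ := ⟨∑ g, c g • ρ g, by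
    intro h
    have : ∀ v, (∑ g, c g • ρ g) (ρ h v) = ρ h ((∑ g, c g • ρ g) v) := by
      intro v
      simp only [LinearMap.sum_apply, LinearMap.smul_apply, map_sum, map_smul]
      rw [← Equiv.sum_comp (MulAut.conj h).toEquiv]
      refine Finset.sum_congr rfl fun g _ => ?_
      simp [hc, ← Module.End.mul_apply, ← map_mul]
    first | exact this | exact LinearMap.ext this⟩
  obtain ⟨l, hl⟩ := (Representation.IsIrreducible.algebraMap_intertwiningMap_bijective_of_isAlgClosed (ρ := ρ)).2 T
  have hl' : ∑ g, c g • ρ g = l • (1 : Module.End ℂ V) := by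
    have := congrArg (fun f => f.toLinearMap) hl
    exact this.symm
  have ht := congrArg (LinearMap.trace ℂ V) hl'
  have hs : LinearMap.trace ℂ V (∑ g, c g • ρ g) = ∑ g, c g * ρ.character g := by
    simp [Representation.character]
  rw [hs, h] at ht
  have hn : Nontrivial V := by
    by_contra hV
    rw [not_nontrivial_iff_subsingleton] at hV
    have : Nontrivial (Subrepresentation ρ) := inferInstance
    obtain ⟨a, b, hab⟩ := this
    exact hab (Subrepresentation.toSubmodule_injective (Subsingleton.elim _ _))
  have hd : (Module.finrank ℂ V : ℂ) ≠ 0 := by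
    exact_mod_cast Module.finrank_pos.ne'
  have : l = 0 := by
    simp [LinearMap.trace_one] at ht
    exact ht.resolve_right Module.finrank_pos.ne'
  rw [hl', this, zero_smul]

open scoped MonoidAlgebra in
theorem aux_act {G : Type} [Group G] (M : Type) [AddCommGroup M] [Module ℂ M]
    [Module ℂ[G] M] [IsScalarTower ℂ ℂ[G] M] (g : G) (r : ℂ) (m : M) :
    (MonoidAlgebra.single g r : ℂ[G]) • m = r • Representation.ofModule' (k := ℂ) (G := G) M g m := by
  have h : (MonoidAlgebra.single g r : ℂ[G]) = r • MonoidAlgebra.single g 1 := by simp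
  rw [h, smul_assoc]
  rfl

open scoped MonoidAlgebra in
theorem aux_irr {G : Type} [Group G] (M : Type) [AddCommGroup M] [Module ℂ M]
    [Module ℂ[G] M] [IsScalarTower ℂ ℂ[G] M] (hS : IsSimpleModule ℂ[G] M) :
    (Representation.ofModule' (k := ℂ) (G := G) M).IsIrreducible := by
  have e : Subrepresentation (Representation.ofModule' (k := ℂ) (G := G) M) ≃o Submodule ℂ[G] M :=
    { toFun := fun σ =>
        { carrier := σ.toSubmodule
          add_mem' := σ.toSubmodule.add_mem'
          zero_mem' := σ.toSubmodule.zero_mem'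
          smul_mem' := by
            intro b x hx
            induction b using MonoidAlgebra.induction_linear with
            | zero => rw [zero_smul]; exact σ.toSubmodule.zero_mem
            | add x y hx hy => rw [add_smul]; exact σ.toSubmodule.add_mem hx hy
            | single k r =>
              rw [aux_act]
              exact σ.toSubmodule.smul_mem _ (σ.apply_mem_toSubmodule k hx) }
      invFun := fun N => ⟨N.restrictScalars ℂ, fun g v hv => by
        have := N.smul_mem (MonoidAlgebra.single g 1 : ℂ[G]) hv
        rw [aux_act, one_smul] at this
        exact this⟩
      left_inv := fun σ => rfl
      right_inv := fun σ => rfl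
      map_rel_iff' := Iff.rfl }
  rw [isSimpleModule_iff] at hS
  exact (OrderIso.isSimpleOrder_iff e).2 hS

open scoped MonoidAlgebra in
theorem aux_simple {G : Type} [Group G] [Fintype G] (c : G → ℂ)
    (hc : ∀ g h : G, c (h * g * h⁻¹) = c g)
    (h : ∀ ρ, IsIrrChar G ρ → ∑ g, c g * ρ g = 0) (M : Type) [AddCommGroup M] [Module ℂ M]
    [Module ℂ[G] M] [IsScalarTower ℂ ℂ[G] M]
    (hS : IsSimpleModule ℂ[G] M) (m : M) :
    (∑ g, MonoidAlgebra.single g (c g) : ℂ[G]) • m = 0 := by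
  have hirr := aux_irr (G := G) M hS
  have hfin : Module.Finite ℂ[G] M := inferInstance
  have : FiniteDimensional ℂ M := Module.Finite.trans ℂ[G] _
  have h0 := aux_scalar_zero (Representation.ofModule' (k := ℂ) (G := G) M) c hc
    (h _ (aux_isIrrChar_of _))
  have h1 := LinearMap.congr_fun h0 m
  simpa [Finset.sum_smul, aux_act] using h1

open scoped MonoidAlgebra in
theorem aux_complete {G : Type} [Group G] [Fintype G] (c : G → ℂ)
    (hc : ∀ g h : G, c (h * g * h⁻¹) = c g)
    (h : ∀ ρ, IsIrrChar G ρ → ∑ g, c g * ρ g = 0) : c = 0 := by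
  classical
  let a : ℂ[G] := ∑ g, MonoidAlgebra.single g (c g)
  have hac : ∀ b : ℂ[G], b * a = a * b := by
    intro b
    induction b using MonoidAlgebra.induction_linear with
    | zero => simp
    | add x y hx hy => rw [add_mul, mul_add, hx, hy]
    | single k r =>
      simp only [a, Finset.mul_sum, Finset.sum_mul, MonoidAlgebra.single_mul_single]
      conv_rhs => rw [← Equiv.sum_comp (MulAut.conj k).toEquiv]
      refine Finset.sum_congr rfl fun g _ => ?_
      simp [hc, mul_comm r]
  have key : ∀ S : Submodule ℂ[G] ℂ[G], IsSimpleModule ℂ[G] S → ∀ m ∈ S, a * m = 0 := by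
    intro S hS m hm
    have := congrArg Subtype.val (aux_simple c hc h S hS ⟨m, hm⟩)
    simpa using this
  let K : Submodule ℂ[G] ℂ[G] :=
    { carrier := {m | a * m = 0}
      add_mem' := by intro x y hx hy; simp_all [mul_add]
      zero_mem' := by simp
      smul_mem' := by
        intro r x hx
        simp only [Set.mem_ofPred_eq, smul_eq_mul] at *
        rw [← mul_assoc, ← hac, mul_assoc, hx, mul_zero] }
  have hK : K = ⊤ := by
    rw [eq_top_iff, ← IsSemisimpleModule.sSup_simples_eq_top ℂ[G] ℂ[G]]
    exact sSup_le fun S hS m hm => key S hS m hm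
  have h1 : (1 : ℂ[G]) ∈ K := by rw [hK]; trivial
  have h2 : a = 0 := by simpa [K] using h1
  funext g
  have h3 := congrArg (fun f : ℂ[G] => f.coeff g) h2
  simpa [a, Finsupp.single_apply] using h3

open scoped ComplexOrder in
theorem aux_conj {G : Type} [Group G] [Fintype G] (V : FDRep ℂ G) (g : G) :
    V.character g⁻¹ = (starRingEnd ℂ) (V.character g) := by
  classical
  let b := Module.finBasis ℂ V
  let M : G → Matrix _ _ ℂ := fun g => LinearMap.toMatrix b b (V.ρ g)
  have hM : ∀ x y, M (x * y) = M x * M y := by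
    intro x y
    simp only [M, map_mul, LinearMap.toMatrix_mul]
  have hM1 : M 1 = 1 := by simp [M, LinearMap.toMatrix_one]
  have ht : ∀ x, V.character x = (M x).trace := fun x =>
    LinearMap.trace_eq_matrix_trace ℂ b (V.ρ x)
  let P := ∑ x, (M x).conjTranspose * M x
  have hP : P.PosDef := by
    have : P = (M 1).conjTranspose * M 1 + ∑ x ∈ Finset.univ.erase 1, (M x).conjTranspose * M x :=
      (Finset.add_sum_erase _ (fun x => (M x).conjTranspose * M x) (Finset.mem_univ 1)).symm
    rw [this, hM1]
    refine Matrix.PosDef.add_posSemidef (by simpa using Matrix.PosDef.one) ?_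
    exact Matrix.posSemidef_sum _ fun x _ => Matrix.posSemidef_conjTranspose_mul_self _
  have hinv : (M g).conjTranspose * P * M g = P := by
    simp only [P, Finset.mul_sum, Finset.sum_mul]
    conv_rhs => rw [← Equiv.sum_comp (Equiv.mulRight g)]
    refine Finset.sum_congr rfl fun x _ => ?_
    simp [hM, Matrix.mul_assoc]
  have hgg : M g * M g⁻¹ = 1 := by rw [← hM]; simp [hM1]
  have hPu : IsUnit P.det := (Matrix.isUnit_iff_isUnit_det _).1 hP.isUnit
  have e : (M g).conjTranspose * P = P * M g⁻¹ := by
    conv_rhs => rw [← hinv]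
    rw [Matrix.mul_assoc _ (M g), hgg, Matrix.mul_one]
  have e2 : (M g).conjTranspose = P * M g⁻¹ * P⁻¹ := by
    rw [← e, Matrix.mul_nonsing_inv_cancel_right _ _ hPu]
  have e3 := congrArg Matrix.trace e2
  rw [Matrix.trace_conjTranspose, Matrix.trace_mul_comm, ← Matrix.mul_assoc,
    Matrix.nonsing_inv_mul _ hPu, Matrix.one_mul] at e3
  rw [ht, ht, ← e3]; rfl

theorem aux_orth {G : Type} [Group G] [Fintype G] {ρ σ : G → ℂ} (hρ : IsIrrChar G ρ)
    (hσ : IsIrrChar G σ) [Decidable (ρ = σ)] :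
    (Fintype.card G : ℂ)⁻¹ * ∑ g, ρ g * (starRingEnd ℂ) (σ g) = if ρ = σ then 1 else 0 := by
  have : Invertible (Nat.card G : ℂ) := invertibleOfNonzero (by simp)
  obtain ⟨V, hV, rfl⟩ := hρ
  obtain ⟨W, hW, rfl⟩ := hσ
  have h := FDRep.char_orthonormal V W
  simp only [aux_conj, Nat.card_eq_fintype_card] at h
  rw [h]
  by_cases hn : Nonempty (V ≅ W)
  · rw [if_pos hn, if_pos (FDRep.char_iso hn.some)]
  · rw [if_neg hn] at h ⊢
    rw [if_neg]
    intro heq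
    have h' := FDRep.char_orthonormal V V
    rw [if_pos ⟨CategoryTheory.Iso.refl V⟩] at h'
    simp only [aux_conj, Nat.card_eq_fintype_card] at h'
    rw [← heq, h'] at h
    exact one_ne_zero h

theorem aux_norm {G : Type} [Group G] [Fintype G] (N : Subgroup G) [N.Normal] 
    (χ : (G ⧸ N) →* ℂˣ) {ρ : G → ℂ} (hρ : IsIrrChar G ρ) : IsIrrChar G (charMul N χ ρ) := by
  obtain ⟨V, hV, rfl⟩ := hρ
  let r : Representation ℂ G V :=
    { toFun := fun g => (χ (g : G ⧸ N) : ℂ) • V.ρ g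
      map_one' := by simp
      map_mul' := by
        intro x y
        ext v
        simp [smul_smul, mul_comm] }
  have hc : (FDRep.of r).character = charMul N χ V.character := by
    funext g
    change LinearMap.trace ℂ V ((χ (g : G ⧸ N) : ℂ) • V.ρ g) = _
    simp [charMul, FDRep.character]
  refine ⟨FDRep.of r, ?_, hc.symm⟩
  rw [FDRep.simple_iff_char_is_norm_one] at hV ⊢
  rw [hc, ← hV]
  refine Finset.sum_congr rfl fun g _ => ?_
  have : (χ (g : G ⧸ N) : ℂ) * (χ ((g⁻¹ : G) : G ⧸ N) : ℂ) = 1 := by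
    rw [← Units.val_mul, ← map_mul, ← QuotientGroup.mk_mul]; simp
  simp only [charMul]
  linear_combination (V.character g * V.character g⁻¹) * this

theorem aux_conj_unit {Q : Type} [Group Q] [Finite Q] (χ : Q →* ℂˣ) (x : Q) :
    (starRingEnd ℂ) (χ x : ℂ) = (χ x⁻¹ : ℂ) := by
  have hn : ‖(χ x : ℂ)‖ = 1 := by
    refine Complex.norm_eq_one_of_pow_eq_one (n := Nat.card Q) ?_ Nat.card_pos.ne'
    rw [← Units.val_pow_eq_pow_val, ← map_pow]; simp
  rw [map_inv, Units.val_inv_eq_inv_val, Complex.inv_eq_conj hn]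

theorem aux_piQ {G : Type} [Group G] [Fintype G] (N : Subgroup G) [N.Normal]
    (hQ : ∀ a b : G ⧸ N, a * b = b * a) [Fintype ((G ⧸ N) →* ℂˣ)] (x : G ⧸ N) (g : G)
    [Decidable ((g : G ⧸ N) = x)] :
    piQ N x g = if (g : G ⧸ N) = x then 1 else 0 := by
  let : CommGroup (G ⧸ N) := { (inferInstance : Group (G ⧸ N)) with mul_comm := hQ }
  have : NeZero (Monoid.exponent (G ⧸ N)) := ⟨Monoid.exponent_ne_zero_of_finite⟩
  unfold piQ
  rw [finsum_eq_sum_of_fintype]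
  split_ifs with h
  · rw [h]
    have : ∀ χ : (G ⧸ N) →* ℂˣ, (starRingEnd ℂ) (χ x : ℂ) * (χ x : ℂ) = 1 := by
      intro χ
      rw [aux_conj_unit, ← Units.val_mul, ← map_mul]; simp
    simp [this]
  · have hne : x⁻¹ * (g : G ⧸ N) ≠ 1 := fun h' => h (inv_mul_eq_one.1 h').symm
    obtain ⟨φ, hφ⟩ := CommGroup.exists_apply_ne_one_of_hasEnoughRootsOfUnity (G ⧸ N) ℂ hne
    have hs : ∀ χ : (G ⧸ N) →* ℂˣ, (starRingEnd ℂ) (χ x : ℂ) * (χ (g : G ⧸ N) : ℂ) = 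
        (χ (x⁻¹ * (g : G ⧸ N)) : ℂ) := by
      intro χ
      rw [aux_conj_unit, ← Units.val_mul, ← map_mul]
    simp only [hs]
    have h2 : ∑ χ : (G ⧸ N) →* ℂˣ, (χ (x⁻¹ * (g : G ⧸ N)) : ℂ) =
       (φ (x⁻¹ * (g : G ⧸ N)) : ℂ) * ∑ χ : (G ⧸ N) →* ℂˣ, (χ (x⁻¹ * (g : G ⧸ N)) : ℂ) := by
      conv_lhs => rw [← Equiv.sum_comp (Equiv.mulLeft φ)]
      simp [Finset.mul_sum]
    have h3 : (φ (x⁻¹ * (g : G ⧸ N)) : ℂ) - 1 ≠ 0 := by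
      rw [sub_ne_zero]; exact fun h' => hφ (Units.ext h')
    have h4 : ∑ χ : (G ⧸ N) →* ℂˣ, (χ (x⁻¹ * (g : G ⧸ N)) : ℂ) = 0 := by
      refine (mul_eq_zero.1 (?_ : ((φ (x⁻¹ * (g : G ⧸ N)) : ℂ) - 1) * _ = 0)).resolve_left h3
      linear_combination -h2
    rw [h4, mul_zero]

theorem aux_finite {G : Type} [Group G] [Fintype G] (N : Subgroup G) [N.Normal]
    (hQ : ∀ a b : G ⧸ N, a * b = b * a) : Finite ((G ⧸ N) →* ℂˣ) := by
  let : CommGroup (G ⧸ N) := { (inferInstance : Group (G ⧸ N)) with mul_comm := hQ }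
  have : NeZero (Monoid.exponent (G ⧸ N)) := ⟨Monoid.exponent_ne_zero_of_finite⟩
  exact Finite.of_equiv _
    (CommGroup.monoidHom_mulEquiv_of_hasEnoughRootsOfUnity (G ⧸ N) ℂ).some.toEquiv.symm

open Classical in
theorem aux_key {G : Type} [Group G] [Fintype G] (N : Subgroup G) [N.Normal]
    [Fintype ((G ⧸ N) →* ℂˣ)] (x : G ⧸ N)
    {ρ σ : G → ℂ} (hρ : IsIrrChar G ρ) (hσ : IsIrrChar G σ) :
    (Fintype.card G : ℂ)⁻¹ * ∑ g, piQ N x g * (ρ g * (starRingEnd ℂ) (σ g)) =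
    (Nat.card ((G ⧸ N) →* ℂˣ) : ℂ)⁻¹ * ∑ χ : (G ⧸ N) →* ℂˣ,
      (starRingEnd ℂ) (χ x : ℂ) * if charMul N χ ρ = σ then 1 else 0 := by
  have h1 : ∀ χ : (G ⧸ N) →* ℂˣ, (if charMul N χ ρ = σ then (1 : ℂ) else 0) =
      (Fintype.card G : ℂ)⁻¹ * ∑ g, charMul N χ ρ g * (starRingEnd ℂ) (σ g) :=
    fun χ => (aux_orth (aux_norm N χ hρ) hσ).symm
  simp only [h1, piQ, finsum_eq_sum_of_fintype, charMul, Finset.mul_sum, Finset.sum_mul]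
  rw [Finset.sum_comm]
  refine Finset.sum_congr rfl fun χ _ => Finset.sum_congr rfl fun g _ => ?_
  ring

open Classical in
theorem aux_orbit {G : Type} [Group G] [Fintype G] (N : Subgroup G) [N.Normal]
    [Fintype ((G ⧸ N) →* ℂˣ)] (ρ : G → ℂ) :
    (qhatOrbit N ρ).ncard * (Finset.univ.filter fun χ : (G ⧸ N) →* ℂˣ => charMul N χ ρ = ρ).card
      = Nat.card ((G ⧸ N) →* ℂˣ) := by
  have hfib : ∀ σ ∈ Finset.univ.image (fun χ : (G ⧸ N) →* ℂˣ => charMul N χ ρ),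
      (Finset.univ.filter fun χ : (G ⧸ N) →* ℂˣ => charMul N χ ρ = σ).card =
      (Finset.univ.filter fun χ : (G ⧸ N) →* ℂˣ => charMul N χ ρ = ρ).card := by
    intro σ hσ
    obtain ⟨ψ, -, rfl⟩ := Finset.mem_image.1 hσ
    symm
    refine Finset.card_bij (fun χ _ => ψ * χ) ?_ ?_ ?_
    · intro χ hχ
      simp only [Finset.mem_filter, Finset.mem_univ, true_and] at hχ ⊢
      funext g
      have := congrFun hχ g
      simp only [charMul, MonoidHom.mul_apply, Units.val_mul] at this ⊢
      rw [mul_assoc, this]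
    · intro a _ b _ h
      exact mul_left_cancel h
    · intro χ hχ
      refine ⟨ψ⁻¹ * χ, ?_, mul_inv_cancel_left ψ χ⟩
      simp only [Finset.mem_filter, Finset.mem_univ, true_and] at hχ ⊢
      funext g
      have := congrFun hχ g
      simp only [charMul, MonoidHom.mul_apply, MonoidHom.inv_apply, Units.val_mul] at this ⊢
      rw [mul_assoc, this, ← mul_assoc, ← Units.val_mul]
      simp
  have h1 := Finset.card_eq_sum_card_image (fun χ : (G ⧸ N) →* ℂˣ => charMul N χ ρ) Finset.univ
  rw [Finset.sum_congr rfl hfib, Finset.sum_const, smul_eq_mul] at h1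
  have h2 : qhatOrbit N ρ = ↑(Finset.univ.image (fun χ : (G ⧸ N) →* ℂˣ => charMul N χ ρ)) := by
    ext σ
    simp [qhatOrbit, eq_comm]
  rw [h2, Set.ncard_coe_finset, ← h1, Nat.card_eq_fintype_card, Finset.card_univ]

theorem aux_orbit_eq {G : Type} [Group G] (N : Subgroup G) [N.Normal]
    (ψ : (G ⧸ N) →* ℂˣ) (ρ : G → ℂ) : qhatOrbit N (charMul N ψ ρ) = qhatOrbit N ρ := by
  ext σ
  constructor
  · rintro ⟨χ, rfl⟩
    refine ⟨χ * ψ, ?_⟩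
    funext g
    simp [charMul, mul_assoc]
  · rintro ⟨χ, rfl⟩
    refine ⟨χ * ψ⁻¹, ?_⟩
    funext g
    simp [charMul, mul_assoc]

theorem aux_classFun {G : Type} [Group G] [Fintype G] (N : Subgroup G) [N.Normal]
    (hQ : ∀ a b : G ⧸ N, a * b = b * a) (x : G ⧸ N) {ρ : G → ℂ} (hρ : IsIrrChar G ρ) (r : ℂ) :
    (fun g => r * (piQ N x g * ρ g)) ∈ classFunSubmodule G := by
  obtain ⟨V, hV, rfl⟩ := hρ
  intro g h
  have h1 : ((h * g * h⁻¹ : G) : G ⧸ N) = (g : G ⧸ N) := by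
    rw [QuotientGroup.mk_mul, QuotientGroup.mk_mul, hQ (h : G ⧸ N), QuotientGroup.mk_inv,
      mul_inv_cancel_right]
  simp only [piQ, h1, FDRep.char_conj]

theorem aux_span {G : Type} [Group G] [Fintype G] (W : Submodule ℂ (G → ℂ))
    (hW : ∀ ρ, IsIrrChar G ρ → ρ ∈ W) : classFunSubmodule G ≤ W := by
  classical
  intro f hf
  by_contra hfW
  obtain ⟨φ, hφf, hφ⟩ := Submodule.exists_le_ker_of_notMem hfW
  let c : G → ℂ := fun g => ∑ h : G, φ (Pi.single (h * g * h⁻¹) 1)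
  have hφs : ∀ k : G → ℂ, φ k = ∑ g, k g * φ (Pi.single g 1) := by
    intro k
    conv_lhs => rw [pi_eq_sum_univ' k]
    simp [map_sum]
  have hcs : ∀ k : G → ℂ, (∀ g h : G, k (h * g * h⁻¹) = k g) →
      ∑ g, c g * k g = Fintype.card G * φ k := by
    intro k hk
    simp only [c, Finset.sum_mul]
    rw [Finset.sum_comm]
    have : ∀ h : G, ∑ g, φ (Pi.single (h * g * h⁻¹) 1) * k g = φ k := by
      intro h
      rw [hφs k]
      conv_rhs => rw [← Equiv.sum_comp (MulAut.conj h).toEquiv]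
      refine Finset.sum_congr rfl fun g _ => ?_
      simp [hk, mul_comm]
    simp [this]
  have hc0 : c = 0 := by
    apply aux_complete
    · intro g h
      simp only [c]
      conv_rhs => rw [← Equiv.sum_comp (Equiv.mulRight h)]
      refine Finset.sum_congr rfl fun y _ => ?_
      simp [mul_assoc]
    · intro ρ hρ
      have h1 : φ ρ = 0 := hφ (hW ρ hρ)
      obtain ⟨V, hV, rfl⟩ := hρ
      rw [hcs _ (fun g h => FDRep.char_conj V g h), h1, mul_zero]
  have h2 := hcs f hf
  simp [hc0] at h2
  exact hφf h2

/-- The class functions `√(#[ρ]) · (π_x ⊗ ρ)`, indexed by orbit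
representatives `ρ ∈ U` and cosets `x ∈ Q` in the common kernel of `Stab(ρ)`, form an
orthonormal basis of the space of class functions on `G`. -/
theorem orthonormal_basis_classFun
    (G : Type) [Group G] [Fintype G] (N : Subgroup G) [N.Normal]
    (hQ : ∀ a b : G ⧸ N, a * b = b * a)
    (U : Set (G → ℂ))
    (hU1 : ∀ ρ ∈ U, IsIrrChar G ρ)
    (hU2 : ∀ ρ ∈ U, ∀ ρ' ∈ U, qhatOrbit N ρ = qhatOrbit N ρ' → ρ = ρ')
    (hU3 : ∀ ρ : G → ℂ, IsIrrChar G ρ → ∃ ρ' ∈ U, ρ ∈ qhatOrbit N ρ')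
    (B : {p : (G → ℂ) × (G ⧸ N) //
        p.1 ∈ U ∧ ∀ χ : (G ⧸ N) →* ℂˣ, charMul N χ p.1 = p.1 → χ p.2 = 1} → G → ℂ)
    (hB : ∀ i, B i = fun g =>
      (Real.sqrt ((qhatOrbit N i.1.1).ncard : ℝ) : ℂ) * (piQ N i.1.2 g * i.1.1 g)) :
    (∀ i, B i ∈ classFunSubmodule G) ∧
    (∀ i j, i = j →
      (Fintype.card G : ℂ)⁻¹ * ∑ g : G, B i g * (starRingEnd ℂ) (B j g) = 1) ∧
    (∀ i j, i ≠ j →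
      (Fintype.card G : ℂ)⁻¹ * ∑ g : G, B i g * (starRingEnd ℂ) (B j g) = 0) ∧
    Submodule.span ℂ (Set.range B) = classFunSubmodule G := by
  classical
  have := aux_finite N hQ
  have : Fintype ((G ⧸ N) →* ℂˣ) := Fintype.ofFinite _
  have hpi := fun x g => aux_piQ N hQ x g
  have hmul : ∀ i j, (Fintype.card G : ℂ)⁻¹ * ∑ g : G, B i g * (starRingEnd ℂ) (B j g) =
      (Real.sqrt ((qhatOrbit N i.1.1).ncard : ℝ) : ℂ) *
      (Real.sqrt ((qhatOrbit N j.1.1).ncard : ℝ) : ℂ) * if i.1.2 = j.1.2 then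
      ((Nat.card ((G ⧸ N) →* ℂˣ) : ℂ)⁻¹ * ∑ χ : (G ⧸ N) →* ℂˣ,
      (starRingEnd ℂ) (χ i.1.2 : ℂ) * if charMul N χ i.1.1 = j.1.1 then 1 else 0) else 0 := by
    intro i j
    split_ifs with hx
    · rw [← aux_key N i.1.2 (hU1 _ i.2.1) (hU1 _ j.2.1)]
      simp only [hB, Finset.mul_sum]
      refine Finset.sum_congr rfl fun g _ => ?_
      rw [← hx, hpi]
      simp only [map_mul, Complex.conj_ofReal]
      split_ifs
      · simp only [map_one]; ring
      · simp
    · rw [mul_zero, Finset.sum_eq_zero, mul_zero]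
      intro g _
      simp only [hB]
      rw [hpi, hpi]
      by_cases h1 : (g : G ⧸ N) = i.1.2
      · have h2 : ¬ (g : G ⧸ N) = j.1.2 := fun h => hx (h1 ▸ h)
        simp [h2]
      · simp [h1]
  refine ⟨?_, ?_, ?_, le_antisymm ?_ ?_⟩
  · intro i
    rw [hB]
    exact aux_classFun N hQ _ (hU1 _ i.2.1) _
  · rintro i _ rfl
    rw [hmul, if_pos rfl]
    have h1 : ∑ χ : (G ⧸ N) →* ℂˣ,
        (starRingEnd ℂ) (χ i.1.2 : ℂ) * (if charMul N χ i.1.1 = i.1.1 then 1 else 0) =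
        ((Finset.univ.filter fun χ : (G ⧸ N) →* ℂˣ => charMul N χ i.1.1 = i.1.1).card : ℂ) := by
      rw [Finset.card_filter, Nat.cast_sum]
      refine Finset.sum_congr rfl fun χ _ => ?_
      split_ifs with h
      · rw [i.2.2 χ h]; simp
      · simp
    have h2 := aux_orbit N i.1.1
    have h3 : (Nat.card ((G ⧸ N) →* ℂˣ) : ℂ) ≠ 0 := by
      exact_mod_cast Nat.card_pos.ne'
    rw [h1, ← Complex.ofReal_mul, Real.mul_self_sqrt (Nat.cast_nonneg _)]
    have h4 := congrArg (Nat.cast : ℕ → ℂ) h2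
    push_cast at h4 ⊢
    field_simp
    exact h4
  · intro i j hij
    rw [hmul]
    split_ifs with hx
    · rw [Finset.sum_eq_zero, mul_zero, mul_zero]
      intro χ _
      rw [if_neg, mul_zero]
      intro h
      apply hij
      have : i.1.1 = j.1.1 := hU2 _ i.2.1 _ j.2.1 (by rw [← h, aux_orbit_eq])
      exact Subtype.ext (Prod.ext this hx)
    · rw [mul_zero]
  · rw [Submodule.span_le]
    rintro _ ⟨i, rfl⟩
    rw [hB]
    exact aux_classFun N hQ _ (hU1 _ i.2.1) _
  · apply aux_span
    intro σ hσ
    obtain ⟨ρ, hρU, χ, rfl⟩ := hU3 σ hσ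
    have h0 : charMul N χ ρ = ∑ x : G ⧸ N, (χ x : ℂ) • (fun g => piQ N x g * ρ g) := by
      funext g
      simp only [charMul, Finset.sum_apply, Pi.smul_apply, hpi, smul_eq_mul]
      simp
    rw [h0]
    refine Submodule.sum_mem _ fun x _ => Submodule.smul_mem _ _ ?_
    by_cases hx : ∀ χ : (G ⧸ N) →* ℂˣ, charMul N χ ρ = ρ → χ x = 1
    · let i : {p : (G → ℂ) × (G ⧸ N) //
        p.1 ∈ U ∧ ∀ χ : (G ⧸ N) →* ℂˣ, charMul N χ p.1 = p.1 → χ p.2 = 1} := ⟨(ρ, x), hρU, hx⟩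
      have hpos : (qhatOrbit N ρ).ncard ≠ 0 := by
        intro h
        have h2 := aux_orbit N ρ
        rw [h, zero_mul] at h2
        exact Nat.card_pos.ne h2
      have hs : (Real.sqrt ((qhatOrbit N ρ).ncard : ℝ) : ℂ) ≠ 0 := by
        rw [Complex.ofReal_ne_zero, Real.sqrt_ne_zero']
        exact_mod_cast Nat.pos_of_ne_zero hpos
      have : (fun g => piQ N x g * ρ g) =
          (Real.sqrt ((qhatOrbit N ρ).ncard : ℝ) : ℂ)⁻¹ • B i := by
        rw [hB]
        funext g
        simp only [Pi.smul_apply, smul_eq_mul, i]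
        rw [inv_mul_cancel_left₀ hs]
      rw [this]
      exact Submodule.smul_mem _ _ (Submodule.subset_span ⟨i, rfl⟩)
    · push Not at hx
      obtain ⟨ψ, hψ, hψx⟩ := hx
      have : (fun g => piQ N x g * ρ g) = 0 := by
        funext g
        rw [hpi]
        split_ifs with h
        · have h1 := congrFun hψ g
          simp only [charMul, h] at h1
          have h2 : (ψ x : ℂ) - 1 ≠ 0 := by
            rw [sub_ne_zero]; exact fun h' => hψx (Units.ext h')
          have h3 : ((ψ x : ℂ) - 1) * ρ g = 0 := by linear_combination h1
          simp [(mul_eq_zero.1 h3).resolve_left h2]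
        · simp
      rw [this]
      exact Submodule.zero_mem _
end
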